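/- Let (k_i)_{i : I} be any family of Scott continuous nuclei on a frame L. For a list s = [i₀, …, i_{n-1}] over I, let k_s denote the composite k_{i_{n-1}} ∘ ⋯ ∘ k_{i₀} (with k of the empty list being the identity). Then the map j* defined by j*(U) = ⨆_{s : List I} k_s U is a Scott continuous nucleus on L, each k_i is ≤ j* pointwise, and for every nucleus j on L with k_i ≤ j pointwise for all i, one has j* ≤ j pointwise. That is, j* is the least upper bound of the family (k_i) in the pointwise order on nuclei. -/

import Mathlib

/-!
Each composite `k_s` is inflationary, monotone, meet-preserving and Scott continuous, being a
composite of such maps. Concatenation of lists gives `k_{s ++ t} = k_t ∘ k_s`, so `k_s U` and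
`k_t U` both lie below `k_{s ++ t} U`, and the family `(k_s U)_s` is directed (`compL_directed`).

Hence `k_t (⨆ s, k_s U) = ⨆ s, k_{s ++ t} U ≤ j* U` by Scott continuity, which is idempotency of
`j*`. The frame law turns `j* U ⊓ j* V` into a supremum of the meets `k_s U ⊓ k_t V`, each below
`k_{s ++ t} (U ⊓ V)`, so `j*` preserves meets. Scott continuity of `j*` is an interchange of
suprema. Finally, a nucleus `j` above every `k_i` is above every `k_s`, by induction on `s` and
idempotency of `j`.
-/

/-- `U` is way below `V`: every (inhabited) directed set `D` with `V ≤ sSup D`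
contains some `d` with `U ≤ d`. -/
def WayB {L : Type*} [Order.Frame L] (U V : L) : Prop :=
  ∀ D : Set L, D.Nonempty → DirectedOn (· ≤ ·) D → V ≤ sSup D → ∃ d ∈ D, U ≤ d

/-- An element is compact if it is way below itself. -/
def Cpt {L : Type*} [Order.Frame L] (U : L) : Prop := WayB U U

/-- `U` is well inside `V`. -/
def WellIn {L : Type*} [Order.Frame L] (U V : L) : Prop :=
  ∃ W, U ⊓ W = ⊥ ∧ V ⊔ W = ⊤

/-- `U` is complemented (clopen). -/
def Cplted {L : Type*} [Order.Frame L] (U : L) : Prop :=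
  ∃ W, U ⊓ W = ⊥ ∧ U ⊔ W = ⊤

/-- Scott continuity: preservation of suprema of nonempty directed sets. -/
def ScottCont {L M : Type*} [Order.Frame L] [Order.Frame M] (g : L → M) : Prop :=
  ∀ D : Set L, D.Nonempty → DirectedOn (· ≤ ·) D → g (sSup D) = ⨆ d ∈ D, g d

/-- A nucleus: inflationary, idempotent, binary-meet-preserving endomap. -/
def IsNucleus {L : Type*} [Order.Frame L] (j : L → L) : Prop :=
  (∀ U, U ≤ j U) ∧ (∀ U, j (j U) = j U) ∧ (∀ U V, j (U ⊓ V) = j U ⊓ j V)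

/-- Finite composition of a family of endomaps along a list:
`compL k [i₀, …, iₙ₋₁] U = kᵢₙ₋₁ (⋯ (kᵢ₀ U))`. -/
def compL {L I : Type*} (k : I → L → L) : List I → L → L
  | [], U => U
  | i :: s, U => compL k s (k i U)

theorem IsNucleus.mono {L : Type*} [Order.Frame L] {j : L → L} (hj : IsNucleus j) :
    Monotone j := by
  intro U V h
  have h' := hj.2.2 U V
  rw [inf_eq_left.mpr h] at h'
  exact inf_eq_left.mp h'.symm

theorem compL_append {L I : Type*} (k : I → L → L) (s t : List I) (U : L) :
    compL k (s ++ t) U = compL k t (compL k s U) := by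
  induction s generalizing U with
  | nil => rfl
  | cons i s ih => exact ih (k i U)

section Family

variable {L I : Type*} [Order.Frame L] {k : I → L → L}

theorem le_compL (hk : ∀ i, IsNucleus (k i)) (s : List I) (U : L) : U ≤ compL k s U := by
  induction s generalizing U with
  | nil => exact le_rfl
  | cons i s ih => exact ((hk i).1 U).trans (ih (k i U))

theorem compL_mono (hk : ∀ i, IsNucleus (k i)) (s : List I) : Monotone (compL k s) := by
  induction s with
  | nil => exact monotone_id
  | cons i s ih => exact ih.comp (hk i).mono

theorem compL_inf (hk : ∀ i, IsNucleus (k i)) (s : List I) (U V : L) :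
    compL k s (U ⊓ V) = compL k s U ⊓ compL k s V := by
  induction s generalizing U V with
  | nil => rfl
  | cons i s ih =>
    change compL k s (k i (U ⊓ V)) = _
    rw [(hk i).2.2]
    exact ih _ _

theorem compL_scottCont (hk : ∀ i, IsNucleus (k i)) (sk : ∀ i, ScottCont (k i)) (s : List I) :
    ScottCont (compL k s) := by
  induction s with
  | nil => exact fun D _ _ => sSup_eq_iSup
  | cons i s ih =>
    intro D hne hD
    have hD' : DirectedOn (· ≤ ·) (k i '' D) := by
      rintro _ ⟨a, ha, rfl⟩ _ ⟨b, hb, rfl⟩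
      obtain ⟨c, hc, hac, hbc⟩ := hD a ha b hb
      exact ⟨k i c, ⟨c, hc, rfl⟩, (hk i).mono hac, (hk i).mono hbc⟩
    change compL k s (k i (sSup D)) = _
    rw [sk i D hne hD, ← sSup_image, ih _ (hne.image _) hD', iSup_image]
    rfl

theorem compL_le_append_left (hk : ∀ i, IsNucleus (k i)) (s t : List I) (U : L) :
    compL k s U ≤ compL k (s ++ t) U := by
  rw [compL_append]
  exact le_compL hk t _

theorem compL_le_append_right (hk : ∀ i, IsNucleus (k i)) (s t : List I) (U : L) :
    compL k t U ≤ compL k (s ++ t) U := by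
  rw [compL_append]
  exact compL_mono hk t (le_compL hk s U)

theorem compL_directed (hk : ∀ i, IsNucleus (k i)) (U : L) :
    DirectedOn (· ≤ ·) (Set.range fun s : List I => compL k s U) := by
  rintro _ ⟨s, rfl⟩ _ ⟨t, rfl⟩
  exact ⟨_, ⟨s ++ t, rfl⟩, compL_le_append_left hk s t U, compL_le_append_right hk s t U⟩

theorem compL_iSup (hk : ∀ i, IsNucleus (k i)) (sk : ∀ i, ScottCont (k i)) (t : List I) (U : L) :
    compL k t (⨆ s : List I, compL k s U) = ⨆ s : List I, compL k (s ++ t) U := by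
  rw [iSup, compL_scottCont hk sk t _ (Set.range_nonempty _) (compL_directed hk U), iSup_range]
  simp only [compL_append]

/-- Any nucleus above all the `k_i` is above all their finite composites. -/
theorem compL_le (k : I → L → L) {j : L → L} (hj : IsNucleus j) (hkj : ∀ i U, k i U ≤ j U)
    (s : List I) (U : L) : compL k s U ≤ j U := by
  induction s generalizing U with
  | nil => exact hj.1 U
  | cons i s ih =>
    calc compL k s (k i U) ≤ j (k i U) := ih _
      _ ≤ j (j U) := hj.mono (hkj i U)
      _ = j U := hj.2.1 U

end Family

/-- for any family of Scott continuous nuclei, the map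
`U ↦ ⨆ s : List I, k_s U` (suprema of finite compositions) is a Scott
continuous nucleus and is the least upper bound of the family among nuclei. -/
theorem stmt_11 {L I : Type*} [Order.Frame L] (k : I → L → L)
    (hk : ∀ i, IsNucleus (k i)) (sk : ∀ i, ScottCont (k i)) :
    IsNucleus (fun U => ⨆ s : List I, compL k s U) ∧
    ScottCont (fun U => ⨆ s : List I, compL k s U) ∧
    (∀ i : I, ∀ U : L, k i U ≤ ⨆ s : List I, compL k s U) ∧
    (∀ j : L → L, IsNucleus j → (∀ i U, k i U ≤ j U) →
      ∀ U : L, (⨆ s : List I, compL k s U) ≤ j U) := by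
  refine ⟨⟨fun U => ?_, fun U => ?_, fun U V => ?_⟩, fun D hne hD => ?_, fun i U => ?_,
    fun j hj hkj U => iSup_le fun s => compL_le k hj hkj s U⟩
  · exact le_iSup (fun s : List I => compL k s U) []
  · apply le_antisymm
    · refine iSup_le fun t => ?_
      rw [compL_iSup hk sk]
      exact iSup_le fun s => le_iSup (fun r : List I => compL k r U) (s ++ t)
    · exact le_iSup (fun t : List I => compL k t (⨆ s : List I, compL k s U)) []
  · apply le_antisymm
    · refine iSup_le fun s => ?_
      rw [compL_inf hk]
      exact inf_le_inf (le_iSup (fun s : List I => compL k s U) s)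
        (le_iSup (fun s : List I => compL k s V) s)
    · change (⨆ s : List I, compL k s U) ⊓ (⨆ t : List I, compL k t V) ≤ _
      rw [iSup_inf_eq]
      refine iSup_le fun s => ?_
      rw [inf_iSup_eq]
      refine iSup_le fun t => le_trans ?_
        (le_iSup (fun r : List I => compL k r (U ⊓ V)) (s ++ t))
      rw [compL_inf hk]
      exact inf_le_inf (compL_le_append_left hk s t U) (compL_le_append_right hk s t V)
  · change (⨆ s : List I, compL k s (sSup D)) = ⨆ d ∈ D, ⨆ s : List I, compL k s d
    simp only [fun s => compL_scottCont hk sk s D hne hD]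
    rw [iSup_comm]
    exact iSup_congr fun d => iSup_comm
  · exact le_iSup (fun s : List I => compL k s U) [i]
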